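/- If ν, z ∈ ℂ with Re ν > −1/2 and Re z > 0, then Basset's integral formula holds: K_ν(z) = ((2z)^ν Γ(ν + 1/2) / (2√π)) ∫_{−∞}^∞ e^{−iu} (z² + u²)^{−ν − 1/2} du, where the integral on the right-hand side is a convergent two-sided improper Riemann integral (the limit of ∫_{−N}^{N} as N → ∞). -/

import Mathlib

/-!
Write `I_ν(z) = (z/2)^ν G_ν(z²/4)` with `G_ν(x) = Σ x^n / (n! Γ(n+ν+1))`, an entire function of `x`,
and put `F_ν(x) = ∫_0^∞ t^{-ν-1} e^{-t-x/t} dt` for `x > 0`. The proof links both sides of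
Basset's formula to `F_ν`.

*Series side.* `G'_ν = G_{ν+1}` and `F'_ν = -F_{ν+1}`, and both families satisfy three-term
recurrences, so the Wronskian-type expressions `G_ν G_{-ν-1} - x G_{ν+1} G_{-ν}` and
`F_ν G_{-ν-1} + x F_{ν+1} G_{-ν}` are constant in `x`. Their values, read off at `x = 0`, are
`-sin(πν)/π` (reflection formula) and `1`. Together with the symmetry `x^ν F_ν = F_{-ν}` these are
linear equations for `F_ν` and `F_{ν+1}`, and eliminating `F_{ν+1}` gives
`sin(πν) F_ν = π (x^{-ν} G_{-ν} - G_ν)` (`sin_mul_besselF`). At `x = r²/4` this says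
`K_ν(r) = (r/2)^ν F_ν(r²/4) / 2` for noninteger `ν` and `r > 0`.

*Integral side.* One integration by parts (`basset_tendsto`) shows that the conditionally
convergent integral equals `i (2ν+1) A_ν(z)`, where
`A_ν(z) = ∫ e^{-iu} u (z²+u²)^{-ν-3/2} du` converges absolutely, is holomorphic in `z` and
continuous in `ν`. For `z = r > 0`, writing `(r²+u²)^{-ν-3/2}` as a Gamma integral, exchanging the
order of integration and evaluating a Gaussian Fourier transform turns `A_ν(r)` into
`F_ν(r²/4)` up to explicit factors (`Gamma_mul_bassetA`, `bassetR_ofReal`).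

The formula thus holds for noninteger `ν` and real `z > 0`; the identity theorem extends it to
`Re z > 0` (`bessel_eq_bassetR`), and continuity in `ν` of the integral side yields the limit that
defines `K_n` for integers `n`.
-/

open Filter Set MeasureTheory
open scoped Real Classical

/-- The modified Bessel function of the first kind
`I_ν(z) = Σ_{n=0}^∞ (z/2)^{ν+2n} / (n! Γ(n+ν+1))`, with the principal branch of powers.
(When `ν` is a negative integer the terms with `n + ν + 1 ≤ 0` vanish, since Mathlib's
`Complex.Gamma` vanishes at nonpositive integers, implementing the convention that the sum
starts at `n = -ν`.) -/
noncomputable def besselI (ν z : ℂ) : ℂ :=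
  ∑' n : ℕ, (z / 2) ^ (ν + 2 * (n : ℂ)) / ((n.factorial : ℂ) * Complex.Gamma ((n : ℂ) + ν + 1))

/-- The modified Bessel function of the second kind:
`K_ν = (π / (2 sin (νπ))) (I_{-ν} - I_ν)` for non-integer `ν`, and for integer `ν` the limit
of this expression as the order tends to `ν`. -/

noncomputable def besselK (ν z : ℂ) : ℂ :=
  if ∃ n : ℤ, ν = (n : ℂ) then
    limUnder (nhdsWithin ν {ν}ᶜ)
      (fun μ => ((Real.pi : ℂ) / (2 * Complex.sin (μ * (Real.pi : ℂ)))) *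
        (besselI (-μ) z - besselI μ z))
  else ((Real.pi : ℂ) / (2 * Complex.sin (ν * (Real.pi : ℂ)))) * (besselI (-ν) z - besselI ν z)

/-! ### The entire series `G_ν` -/

/-- `G_ν(x) = Σ x^n / (n! Γ(n+ν+1))`, the entire factor of `I_ν(z) = (z/2)^ν G_ν(z²/4)`. The
reciprocal `Γ⁻¹` takes its correct value `0` at the poles of `Γ`, since `Complex.Gamma` is `0`
there. -/
noncomputable def besselG (ν x : ℂ) : ℂ :=
  ∑' n : ℕ, x ^ n / (n.factorial : ℂ) * (Complex.Gamma ((n : ℂ) + ν + 1))⁻¹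

lemma inv_Gamma_rec (s : ℂ) : (Complex.Gamma s)⁻¹ = s * (Complex.Gamma (s + 1))⁻¹ :=
  Complex.one_div_Gamma_eq_self_mul_one_div_Gamma_add_one s

/-- Reciprocal Gamma values along `n + ν + 1` are bounded: they decrease in norm once
`n ≥ ‖ν‖`. -/
lemma inv_Gamma_bdd (ν : ℂ) :
    ∃ C : ℝ, ∀ n : ℕ, ‖(Complex.Gamma ((n : ℂ) + ν + 1))⁻¹‖ ≤ C := by
  obtain ⟨N, hN⟩ := exists_nat_ge ‖ν‖
  set a : ℕ → ℝ := fun n => ‖(Complex.Gamma ((n : ℂ) + ν + 1))⁻¹‖ with ha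
  have hstep : ∀ n, N ≤ n → a (n + 1) ≤ a n := by
    intro n hn
    have h1 : a n = ‖(n : ℂ) + ν + 1‖ * a (n + 1) := by
      simp only [ha]
      rw [inv_Gamma_rec ((n : ℂ) + ν + 1), norm_mul]
      push_cast
      congr 4
      ring
    have h2 : 1 ≤ ‖(n : ℂ) + ν + 1‖ := by
      have h3 := Complex.abs_re_le_norm ((n : ℂ) + ν + 1)
      have h4 := Complex.abs_re_le_norm ν
      have h5 : (N : ℝ) ≤ n := by exact_mod_cast hn
      simp at h3
      have h6 := le_abs_self ((n : ℝ) + ν.re + 1)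
      have h7 := neg_abs_le ν.re
      linarith
    rw [h1]
    exact le_mul_of_one_le_left (norm_nonneg _) h2
  refine ⟨∑ i ∈ Finset.range (N + 1), a i, fun n => ?_⟩
  have hle : ∀ k ∈ Finset.range (N + 1), a k ≤ ∑ i ∈ Finset.range (N + 1), a i := fun k hk =>
    Finset.single_le_sum (f := a) (fun i _ => norm_nonneg _) hk
  rcases le_total n N with h | h
  · exact hle n (Finset.mem_range.2 (by omega))
  · induction n, h using Nat.le_induction with
    | base => exact hle N (by simp)
    | succ n hn ih => exact (hstep n hn).trans ih

lemma besselG_summable (ν x : ℂ) :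
    Summable fun n : ℕ => x ^ n / (n.factorial : ℂ) * (Complex.Gamma ((n : ℂ) + ν + 1))⁻¹ := by
  obtain ⟨C, hC⟩ := inv_Gamma_bdd ν
  refine Summable.of_norm_bounded ((Real.summable_pow_div_factorial ‖x‖).mul_right C) fun n => ?_
  rw [norm_mul, norm_div, norm_pow, Complex.norm_natCast]
  gcongr
  exact hC n

lemma besselG_hasDerivAt (ν x : ℂ) : HasDerivAt (besselG ν) (besselG (ν + 1) x) x := by
  obtain ⟨C, hC⟩ := inv_Gamma_bdd ν
  set R := ‖x‖ + 1
  have hR : 0 ≤ R := by positivity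
  have hC0 : 0 ≤ C := (norm_nonneg _).trans (hC 0)
  have hu : Summable fun n : ℕ => (n * R ^ (n - 1) / n.factorial : ℝ) * C := by
    refine Summable.mul_right C ?_
    rw [← summable_nat_add_iff 1]
    refine (Real.summable_pow_div_factorial R).congr fun n => ?_
    rw [Nat.factorial_succ]
    push_cast
    field_simp
  have key := hasDerivAt_tsum_of_isPreconnected (t := Metric.ball (0 : ℂ) R)
    (g := fun (n : ℕ) (y : ℂ) => y ^ n / (n.factorial : ℂ) *
      (Complex.Gamma ((n : ℂ) + ν + 1))⁻¹)
    (g' := fun (n : ℕ) (y : ℂ) => (n * y ^ (n - 1)) / (n.factorial : ℂ) *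
      (Complex.Gamma ((n : ℂ) + ν + 1))⁻¹) (y₀ := 0) (y := x)
    hu Metric.isOpen_ball (convex_ball _ _).isPreconnected
    (fun n y _ => ((hasDerivAt_pow n y).div_const _).mul_const _)
    (fun n y hy => by
      rw [norm_mul, norm_div, norm_mul, norm_pow, Complex.norm_natCast, Complex.norm_natCast]
      have : ‖y‖ ≤ R := by simpa using (le_of_lt (by simpa using hy : ‖y‖ < R))
      gcongr
      exact hC n)
    (by simp [R]; positivity) (besselG_summable ν 0) (by simp [R])
  refine key.congr_deriv ?_
  have hs : Summable fun n : ℕ => ((n : ℂ) * x ^ (n - 1)) / (n.factorial : ℂ) *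
      (Complex.Gamma ((n : ℂ) + ν + 1))⁻¹ := by
    refine Summable.of_norm_bounded hu fun n => ?_
    rw [norm_mul, norm_div, norm_mul, norm_pow, Complex.norm_natCast, Complex.norm_natCast]
    have : ‖x‖ ≤ R := by simp [R]
    gcongr
    exact hC n
  rw [hs.tsum_eq_zero_add, besselG]
  simp only [Nat.cast_zero, zero_mul, zero_div, zero_add]
  refine tsum_congr fun n => ?_
  rw [Nat.factorial_succ, Nat.add_sub_cancel]
  push_cast
  have h1 : (n : ℂ) + 1 ≠ 0 := by exact_mod_cast n.succ_ne_zero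
  have h2 : (n : ℂ) + (ν + 1) + 1 = n + 1 + ν + 1 := by ring
  rw [h2, mul_div_mul_left _ _ h1]

lemma besselG_rec (ν x : ℂ) :
    x * besselG (ν + 2) x + (ν + 1) * besselG (ν + 1) x = besselG ν x := by
  have h0 := besselG_summable (ν + 2) x
  have h1 := besselG_summable (ν + 1) x
  have h2 := besselG_summable ν x
  have hg : besselG ν x = (∑' n : ℕ, (n : ℂ) * (x ^ n / (n.factorial : ℂ) *
      (Complex.Gamma ((n : ℂ) + (ν + 1) + 1))⁻¹)) + (ν + 1) * besselG (ν + 1) x := by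
    have e : ∀ n : ℕ, (n : ℂ) * (x ^ n / (n.factorial : ℂ) *
      (Complex.Gamma ((n : ℂ) + (ν + 1) + 1))⁻¹) = x ^ n / (n.factorial : ℂ) *
      (Complex.Gamma ((n : ℂ) + ν + 1))⁻¹ - (ν + 1) * (x ^ n / (n.factorial : ℂ) *
      (Complex.Gamma ((n : ℂ) + (ν + 1) + 1))⁻¹) := by
      intro n
      rw [inv_Gamma_rec ((n : ℂ) + ν + 1)]
      rw [show (n : ℂ) + ν + 1 + 1 = n + (ν + 1) + 1 by ring]
      ring
    rw [tsum_congr e, (h2.tsum_sub (h1.mul_left (ν + 1))), tsum_mul_left]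
    simp only [besselG]
    ring
  have hs : Summable fun n : ℕ => (n : ℂ) * (x ^ n / (n.factorial : ℂ) *
      (Complex.Gamma ((n : ℂ) + (ν + 1) + 1))⁻¹) := by
    refine (h2.sub (h1.mul_left (ν + 1))).congr fun n => ?_
    rw [inv_Gamma_rec ((n : ℂ) + ν + 1)]
    rw [show (n : ℂ) + ν + 1 + 1 = n + (ν + 1) + 1 by ring]
    ring
  rw [hg, hs.tsum_eq_zero_add, add_left_inj]
  simp only [Nat.cast_zero, zero_mul, zero_add]
  rw [besselG, ← tsum_mul_left]
  refine tsum_congr fun n => ?_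
  rw [Nat.factorial_succ]
  push_cast
  have h1 : (n : ℂ) + 1 ≠ 0 := by exact_mod_cast n.succ_ne_zero
  have h3 : (n.factorial : ℂ) ≠ 0 := by exact_mod_cast n.factorial_ne_zero
  rw [show (n : ℂ) + 1 + (ν + 1) + 1 = n + (ν + 2) + 1 by ring]
  field_simp
  ring

lemma besselG_zero (ν : ℂ) : besselG ν 0 = (Complex.Gamma (ν + 1))⁻¹ := by
  rw [besselG, tsum_eq_single 0]
  · simp
  · intro n hn
    simp [hn]

/-- The left-hand side has zero derivative in `x`, and at `x = 0` it is
`1 / (Γ(ν+1) Γ(-ν))`, given by the reflection formula. -/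
lemma besselG_wronskian (ν x : ℂ) :
    besselG ν x * besselG (-ν - 1) x - x * besselG (ν + 1) x * besselG (-ν) x =
      - (Complex.sin (ν * π) / π) := by
  have hd : ∀ y : ℂ, HasDerivAt (fun x => besselG ν x * besselG (-ν - 1) x -
      x * besselG (ν + 1) x * besselG (-ν) x) 0 y := by
    intro y
    have a1 := besselG_hasDerivAt ν y
    have a2 := besselG_hasDerivAt (-ν - 1) y
    have a3 := besselG_hasDerivAt (ν + 1) y
    have a4 := besselG_hasDerivAt (-ν) y
    have r1 := besselG_rec ν y
    have r2 := besselG_rec (-ν - 1) y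
    rw [show -ν - 1 + 1 = -ν by ring] at a2 r2
    rw [show -ν - 1 + 2 = -ν + 1 by ring] at r2
    rw [show ν + 1 + 1 = ν + 2 by ring] at a3
    refine ((a1.mul a2).sub (((hasDerivAt_id y).mul a3).mul a4)).congr_deriv ?_
    simp only [Pi.mul_apply, id]
    rw [← r1, ← r2]
    ring
  have hc := is_const_of_deriv_eq_zero (fun y => (hd y).differentiableAt)
    (fun y => (hd y).deriv) x 0
  rw [hc, besselG_zero, besselG_zero]
  have h := Complex.Gamma_mul_Gamma_one_sub (-ν)
  rw [show -ν - 1 + 1 = -ν by ring, zero_mul, zero_mul, sub_zero, ← mul_inv, mul_comm,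
    show ν + 1 = 1 - -ν by ring, h, inv_div]
  rw [mul_neg, Complex.sin_neg, neg_div, mul_comm]

lemma besselI_eq (ν z : ℂ) (hz : z ≠ 0) :
    besselI ν z = (z / 2) ^ ν * besselG ν (z ^ 2 / 4) := by
  rw [besselI, besselG, ← tsum_mul_left]
  refine tsum_congr fun n => ?_
  have h2 : z / 2 ≠ 0 := by simpa using hz
  rw [Complex.cpow_add _ _ h2]
  have : (z / 2) ^ (2 * (n : ℂ)) = (z ^ 2 / 4) ^ n := by
    rw [show (2 * (n : ℂ)) = ((2 * n : ℕ) : ℂ) by push_cast; rfl, Complex.cpow_natCast, pow_mul]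
    congr 1
    ring
  rw [this]
  field_simp

/-! ### The integral `F_ν` -/

/-- The integrand `t^{-ν-1} e^{-t-x/t}` of `F_ν(x)`. -/
noncomputable def besselKer (ν : ℂ) (x t : ℝ) : ℂ :=
  (t : ℂ) ^ (-ν - 1) * (Real.exp (-t - x / t) : ℂ)

/-- `F_ν(x) = ∫_0^∞ t^{-ν-1} e^{-t-x/t} dt`, meaningful for `x > 0`; it equals
`2 x^{-ν/2} K_ν(2√x)`. -/
noncomputable def besselF (ν : ℂ) (x : ℝ) : ℂ := ∫ t in Ioi (0 : ℝ), besselKer ν x t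

lemma norm_besselKer (ν : ℂ) (x : ℝ) {t : ℝ} (ht : 0 < t) :
    ‖besselKer ν x t‖ = t ^ (-ν.re - 1) * Real.exp (-t - x / t) := by
  rw [besselKer, norm_mul, Complex.norm_cpow_eq_rpow_re_of_pos ht, Complex.norm_real,
    Real.norm_of_nonneg (Real.exp_pos _).le]
  simp

lemma continuousOn_besselKer (ν : ℂ) (x : ℝ) : ContinuousOn (besselKer ν x) (Ioi 0) := by
  intro t ht
  have ht' : (t : ℂ) ∈ Complex.slitPlane := Complex.ofReal_mem_slitPlane.2 ht
  have ht0 : t ≠ 0 := ne_of_gt ht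
  apply ContinuousAt.continuousWithinAt
  unfold besselKer
  refine ContinuousAt.mul ?_ ?_
  · exact (Complex.continuous_ofReal.continuousAt).cpow continuousAt_const ht'
  · refine Complex.continuous_ofReal.continuousAt.comp ?_
    refine Real.continuous_exp.continuousAt.comp ?_
    exact (continuousAt_id.neg).sub (continuousAt_const.div continuousAt_id ht0)

lemma aesm_besselKer (ν : ℂ) (x : ℝ) :
    AEStronglyMeasurable (besselKer ν x) (volume.restrict (Ioi 0)) :=
  (continuousOn_besselKer ν x).aestronglyMeasurable measurableSet_Ioi

/-- Domination of the kernel uniformly for `x ≥ c`: the bound `e^{-c/t} ≤ n! (t/c)^n` trades the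
decay at `t = 0` for an arbitrarily high power of `t`, leaving a Gamma integrand. -/
lemma norm_besselKer_le (ν : ℂ) (n : ℕ) {c x t : ℝ} (hc : 0 < c) (hx : c ≤ x) (ht : 0 < t) :
    ‖besselKer ν x t‖ ≤ (n.factorial / c ^ n) * (Real.exp (-t) * t ^ ((n - ν.re) - 1)) := by
  rw [norm_besselKer ν x ht]
  have h1 := Real.pow_div_factorial_le_exp (c / t) (by positivity) n
  have h2 : Real.exp (-(c / t)) ≤ n.factorial / c ^ n * t ^ n := by
    rw [Real.exp_neg]
    have : (n.factorial / c ^ n * t ^ n : ℝ) = ((c / t) ^ n / n.factorial)⁻¹ := by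
      rw [div_pow]; field_simp
    rw [this]
    exact inv_anti₀ (by positivity) h1
  have h3 : Real.exp (-t - x / t) ≤ Real.exp (-t) * Real.exp (-(c / t)) := by
    rw [← Real.exp_add]
    apply Real.exp_le_exp.2
    have : c / t ≤ x / t := by gcongr
    linarith
  calc t ^ (-ν.re - 1) * Real.exp (-t - x / t)
      ≤ t ^ (-ν.re - 1) * (Real.exp (-t) * (n.factorial / c ^ n * t ^ n)) := by
        gcongr
        exact h3.trans (by gcongr)
    _ = _ := by
        rw [show (n : ℝ) - ν.re - 1 = (-ν.re - 1) + n by ring, Real.rpow_add ht, Real.rpow_natCast]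
        ring

lemma integrableOn_besselKer_bound (ν : ℂ) (n : ℕ) (hn : ν.re < n) (C : ℝ) :
    IntegrableOn (fun t : ℝ => C * (Real.exp (-t) * t ^ ((n - ν.re) - 1))) (Ioi 0) :=
  (Real.GammaIntegral_convergent (s := n - ν.re) (by linarith)).const_mul _

lemma integrableOn_besselKer (ν : ℂ) {x : ℝ} (hx : 0 < x) :
    IntegrableOn (besselKer ν x) (Ioi 0) := by
  obtain ⟨n, hn⟩ := exists_nat_gt ν.re
  refine Integrable.mono' (integrableOn_besselKer_bound ν n hn (n.factorial / x ^ n))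
    (aesm_besselKer ν x) ?_
  filter_upwards [ae_restrict_mem measurableSet_Ioi] with t ht
  exact norm_besselKer_le ν n hx le_rfl ht

lemma besselKer_div (ν : ℂ) (x : ℝ) {t : ℝ} (ht : 0 < t) :
    besselKer (ν + 1) x t = besselKer ν x t / t := by
  have ht' : (t : ℂ) ≠ 0 := by exact_mod_cast ht.ne'
  rw [besselKer, besselKer, show -(ν + 1) - 1 = (-ν - 1) - 1 by ring, Complex.cpow_sub _ _ ht',
    Complex.cpow_one]
  ring

lemma besselF_hasDerivAt (ν : ℂ) {x : ℝ} (hx : 0 < x) :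
    HasDerivAt (besselF ν) (-besselF (ν + 1) x) x := by
  obtain ⟨n, hn⟩ := exists_nat_gt (ν + 1).re
  have h := hasDerivAt_integral_of_dominated_loc_of_deriv_le
    (μ := volume.restrict (Ioi (0 : ℝ))) (F := fun x t => besselKer ν x t)
    (F' := fun x t => -besselKer (ν + 1) x t) (x₀ := x) (s := Ioi (x / 2))
    (bound := fun t => (n.factorial / (x / 2) ^ n) * (Real.exp (-t) * t ^ ((n - (ν + 1).re) - 1)))
    (Ioi_mem_nhds (by linarith)) (Eventually.of_forall fun y => aesm_besselKer ν y)
    (integrableOn_besselKer ν hx) (aesm_besselKer (ν + 1) x).neg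
    (by
      filter_upwards [ae_restrict_mem measurableSet_Ioi] with t ht y hy
      rw [norm_neg]
      exact norm_besselKer_le (ν + 1) n (by linarith) (le_of_lt hy) ht)
    (integrableOn_besselKer_bound (ν + 1) n hn _)
    (by
      filter_upwards [ae_restrict_mem measurableSet_Ioi] with t ht y hy
      have h1 : HasDerivAt (fun y : ℝ => -t - y / t) (-(1 / t)) y := by
        simpa using ((hasDerivAt_id y).div_const t).const_sub (-t)
      have h2 := (h1.exp.ofReal_comp).const_mul ((t : ℂ) ^ (-ν - 1))
      refine h2.congr_deriv ?_
      rw [besselKer_div ν y ht, besselKer]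
      push_cast
      ring)
  have h2 := h.2
  rw [integral_neg] at h2
  exact h2

/-- Integration of the derivative of `t^{-ν-1} e^{-t-x/t}` over `(0, ∞)`; the boundary terms
vanish. -/
lemma besselF_rec (ν : ℂ) {x : ℝ} (hx : 0 < x) :
    x * besselF (ν + 2) x = (ν + 1) * besselF (ν + 1) x + besselF ν x := by
  have i0 := integrableOn_besselKer ν hx
  have i1 := integrableOn_besselKer (ν + 1) hx
  have i2 := integrableOn_besselKer (ν + 2) hx
  have e : ∀ t ∈ Ioi (0 : ℝ),
      ((-ν - 1) * (t : ℂ) ^ (-ν - 1 - 1)) * ((Real.exp (-t - x / t) : ℝ) : ℂ) +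
        (t : ℂ) ^ (-ν - 1) * ((Real.exp (-t - x / t) * (-1 + x / t ^ 2) : ℝ) : ℂ) =
      x * besselKer (ν + 2) x t - ((ν + 1) * besselKer (ν + 1) x t + besselKer ν x t) := by
    intro t ht
    have ht' : (t : ℂ) ≠ 0 := by exact_mod_cast (ne_of_gt ht)
    rw [show ν + 2 = ν + 1 + 1 by ring, besselKer_div (ν + 1) x ht, besselKer_div ν x ht,
      besselKer, Complex.cpow_sub _ _ ht', Complex.cpow_sub _ _ ht', Complex.cpow_one]
    push_cast
    field_simp
    ring
  have key := integral_Ioi_deriv_mul_eq_sub (a := 0) (a' := (0 : ℂ)) (b' := (0 : ℂ))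
    (u := fun t : ℝ => (t : ℂ) ^ (-ν - 1)) (v := fun t : ℝ => ((Real.exp (-t - x / t) : ℝ) : ℂ))
    (u' := fun t : ℝ => (-ν - 1) * (t : ℂ) ^ (-ν - 1 - 1))
    (v' := fun t : ℝ => ((Real.exp (-t - x / t) * (-1 + x / t ^ 2) : ℝ) : ℂ))
    (by
      intro t ht
      have h := ((hasDerivAt_id (t : ℂ)).cpow_const (c := -ν - 1)
        (Complex.ofReal_mem_slitPlane.2 ht)).comp_ofReal
      simpa using h)
    (by
      intro t ht
      have ht0 : t ≠ 0 := ne_of_gt ht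
      refine (HasDerivAt.exp ?_).ofReal_comp
      have := (hasDerivAt_id t).neg.sub ((hasDerivAt_inv ht0).const_mul x)
      refine this.congr_deriv ?_
      field_simp
      ring)
    (by
      refine IntegrableOn.congr_fun ?_ (fun t ht => (e t ht).symm) measurableSet_Ioi
      exact (i2.const_mul _).sub ((i1.const_mul _).add i0))
    (by
      obtain ⟨n, hn⟩ := exists_nat_gt (ν.re + 1)
      have hlim : Tendsto (fun t : ℝ => (n.factorial / x ^ n) * (Real.exp (-t) *
          t ^ ((n - ν.re) - 1))) (nhdsWithin 0 (Ioi 0)) (nhds 0) := by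
        have hc : ContinuousAt (fun t : ℝ => (n.factorial / x ^ n) * (Real.exp (-t) *
          t ^ ((n - ν.re) - 1))) 0 := by
          refine continuousAt_const.mul (ContinuousAt.mul (by fun_prop) ?_)
          exact Real.continuousAt_rpow_const _ _ (Or.inr (by linarith))
        have := hc.tendsto.mono_left (nhdsWithin_le_nhds (s := Ioi 0))
        simpa [Real.zero_rpow (show (n : ℝ) - ν.re - 1 ≠ 0 by linarith)] using this
      refine squeeze_zero_norm' ?_ hlim
      filter_upwards [self_mem_nhdsWithin] with t ht
      exact norm_besselKer_le ν n hx le_rfl ht)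
    (by
      refine squeeze_zero_norm' ?_
        (tendsto_rpow_mul_exp_neg_mul_atTop_nhds_zero (-ν.re - 1) 1 one_pos)
      filter_upwards [Ioi_mem_atTop 0] with t ht
      refine (norm_besselKer ν x ht).le.trans ?_
      have : 0 < x / t := div_pos hx ht
      have ht' : 0 < t := ht
      gcongr
      linarith)
  have i3 : IntegrableOn (fun t => (ν + 1) * besselKer (ν + 1) x t + besselKer ν x t) (Ioi 0) :=
    (i1.const_mul _).add i0
  rw [setIntegral_congr_fun measurableSet_Ioi e, integral_sub (i2.const_mul _) i3,
    integral_add (i1.const_mul _) i0, integral_const_mul, integral_const_mul] at key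
  simp only [besselF]
  linear_combination key

/-- The substitution `t ↦ 1/t`. -/
lemma besselF_inv (ν : ℂ) (x : ℝ) :
    besselF ν x = ∫ t in Ioi (0 : ℝ), (t : ℂ) ^ (ν - 1) * (Real.exp (-(x * t) - 1 / t) : ℂ) := by
  rw [besselF, ← integral_comp_rpow_Ioi (besselKer ν x) (p := -1) (by norm_num)]
  refine setIntegral_congr_fun measurableSet_Ioi fun t ht => ?_
  have ht : 0 < t := ht
  have ht' : (t : ℂ) ≠ 0 := by exact_mod_cast ht.ne'
  have harg : (t : ℂ).arg ≠ π := by rw [Complex.arg_ofReal_of_nonneg ht.le]; exact Real.pi_pos.ne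
  simp only [besselKer, Real.rpow_neg_one]
  rw [Complex.real_smul, Complex.ofReal_inv, Complex.inv_cpow _ _ harg, ← Complex.cpow_neg]
  have h1 : ((|(-1 : ℝ)| * t ^ (-1 - 1 : ℝ) : ℝ) : ℂ) = (t : ℂ) ^ (-2 : ℂ) := by
    rw [abs_neg, abs_one, one_mul, Complex.ofReal_cpow ht.le]
    norm_num
  rw [h1, ← mul_assoc, ← Complex.cpow_add _ _ ht']
  congr 2
  · ring
  · congr 1
    field_simp
    ring

/-- The substitution `t ↦ x t` in the inverted form of the integral. -/
lemma besselF_symm (ν : ℂ) {x : ℝ} (hx : 0 < x) :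
    (x : ℂ) ^ ν * besselF ν x = besselF (-ν) x := by
  have hx' : (x : ℂ) ≠ 0 := by exact_mod_cast hx.ne'
  have h := integral_comp_mul_left_Ioi (besselKer (-ν) x) 0 hx
  rw [mul_zero] at h
  have h2 : besselF (-ν) x = x * ∫ t in Ioi (0 : ℝ), besselKer (-ν) x (x * t) := by
    rw [h, Complex.real_smul, besselF]
    push_cast
    field_simp
  rw [h2, besselF_inv, ← integral_const_mul, ← integral_const_mul]
  refine setIntegral_congr_fun measurableSet_Ioi fun t ht => ?_
  have ht : 0 < t := ht
  simp only [besselKer]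
  rw [show -(-ν) - 1 = ν - 1 by ring, Complex.ofReal_mul,
    Complex.mul_cpow_ofReal_nonneg hx.le ht.le, Complex.cpow_sub _ _ hx', Complex.cpow_one,
    show x / (x * t) = 1 / t by field_simp]
  field_simp

lemma besselF_tendsto (ν : ℂ) (hν : ν.re < 0) :
    Tendsto (besselF ν) (nhdsWithin 0 (Ioi 0)) (nhds (Complex.Gamma (-ν))) := by
  have hν' : 0 < (-ν).re := by simpa using hν
  rw [Complex.Gamma_eq_integral hν', Complex.GammaIntegral]
  refine tendsto_integral_filter_of_dominated_convergence
    (fun t : ℝ => 1 * (Real.exp (-t) * t ^ (((0 : ℕ) - ν.re) - 1)))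
    (Eventually.of_forall fun x => aesm_besselKer ν x) ?_
    (integrableOn_besselKer_bound ν 0 (by simpa using hν) 1) ?_
  · filter_upwards [self_mem_nhdsWithin] with x hx
    filter_upwards [ae_restrict_mem measurableSet_Ioi] with t ht
    simpa using norm_besselKer_le ν 0 hx le_rfl ht
  · filter_upwards [ae_restrict_mem measurableSet_Ioi] with t ht
    have hc : Continuous fun x : ℝ => besselKer ν x t := by
      unfold besselKer
      fun_prop
    have := (hc.tendsto 0).mono_left (nhdsWithin_le_nhds (s := Ioi 0))
    convert this using 2
    simp [besselKer, mul_comm]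

lemma mul_besselF_tendsto (ν : ℂ) (hν : ν.re < 0) :
    Tendsto (fun x : ℝ => (x : ℂ) * besselF (ν + 1) x) (nhdsWithin 0 (Ioi 0)) (nhds 0) := by
  have : Tendsto (fun x : ℝ => ∫ t in Ioi (0 : ℝ), (x : ℂ) * besselKer (ν + 1) x t)
      (nhdsWithin 0 (Ioi 0)) (nhds (∫ t in Ioi (0 : ℝ), (0 : ℂ))) := by
    refine tendsto_integral_filter_of_dominated_convergence
      (fun t : ℝ => 1 * (Real.exp (-t) * t ^ (((0 : ℕ) - ν.re) - 1)))
      (Eventually.of_forall fun x => (aesm_besselKer (ν + 1) x).const_mul _) ?_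
      (integrableOn_besselKer_bound ν 0 (by simpa using hν) 1) ?_
    · filter_upwards [self_mem_nhdsWithin] with x hx
      filter_upwards [ae_restrict_mem measurableSet_Ioi] with t ht
      have h := norm_besselKer_le (ν + 1) 1 hx le_rfl ht
      have hx : 0 < x := hx
      rw [norm_mul, Complex.norm_real, Real.norm_of_nonneg hx.le]
      refine (mul_le_mul_of_nonneg_left h hx.le).trans (le_of_eq ?_)
      simp only [Nat.factorial_one, Nat.cast_one, pow_one, Complex.add_re, Complex.one_re,
        Nat.cast_zero]
      rw [show (1 : ℝ) - (ν.re + 1) - 1 = 0 - ν.re - 1 by ring]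
      field_simp
    · filter_upwards [ae_restrict_mem measurableSet_Ioi] with t ht
      have hc : Continuous fun x : ℝ => (x : ℂ) * besselKer (ν + 1) x t := by
        unfold besselKer
        fun_prop
      have := (hc.tendsto 0).mono_left (nhdsWithin_le_nhds (s := Ioi 0))
      simpa using this
  simpa [integral_const_mul, besselF] using this

/-- The left-hand side is constant on `(0, ∞)`; for `Re ν < 0` it tends to `Γ(-ν) / Γ(-ν) = 1` as
`x → 0⁺`. -/
lemma besselF_wronskian_of_neg (ν : ℂ) (hν : ν.re < 0) {x : ℝ} (hx : 0 < x) :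
    besselF ν x * besselG (-ν - 1) x + x * besselF (ν + 1) x * besselG (-ν) x = 1 := by
  set P : ℝ → ℂ := fun x => besselF ν x * besselG (-ν - 1) x +
    x * besselF (ν + 1) x * besselG (-ν) x with hP
  have hd : ∀ y ∈ Ioi (0 : ℝ), HasDerivAt P 0 y := by
    intro y hy
    have a1 := besselF_hasDerivAt ν hy
    have a2 := besselF_hasDerivAt (ν + 1) hy
    have a3 := (besselG_hasDerivAt (-ν - 1) y).comp_ofReal
    have a4 := (besselG_hasDerivAt (-ν) y).comp_ofReal
    have r1 := besselF_rec ν hy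
    have r2 := besselG_rec (-ν - 1) y
    rw [show -ν - 1 + 1 = -ν by ring] at a3 r2
    rw [show -ν - 1 + 2 = -ν + 1 by ring] at r2
    rw [show ν + 1 + 1 = ν + 2 by ring] at a2
    refine ((a1.mul a3).add ((((hasDerivAt_id y).ofReal_comp).mul a2).mul a4)).congr_deriv ?_
    simp only [id, Complex.ofReal_one, Pi.mul_apply]
    linear_combination besselF (ν + 1) y * r2 - besselG (-ν) y * r1
  have hconst : ∀ y ∈ Ioi (0 : ℝ), P y = P x := fun y hy =>
    isOpen_Ioi.is_const_of_deriv_eq_zero isPreconnected_Ioi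
      (fun w hw => (hd w hw).differentiableAt.differentiableWithinAt)
      (fun w hw => (hd w hw).deriv) hy hx
  have hG : ∀ μ : ℂ, Tendsto (fun y : ℝ => besselG μ y) (nhdsWithin 0 (Ioi 0))
      (nhds ((Complex.Gamma (μ + 1))⁻¹)) := by
    intro μ
    have h := (besselG_hasDerivAt μ (0 : ℝ)).comp_ofReal.continuousAt.tendsto.mono_left
      (nhdsWithin_le_nhds (s := Ioi 0))
    simpa [besselG_zero] using h
  have hl : Tendsto P (nhdsWithin 0 (Ioi 0)) (nhds 1) := by
    have h := ((besselF_tendsto ν hν).mul (hG (-ν - 1))).add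
      ((mul_besselF_tendsto ν hν).mul (hG (-ν)))
    have hne : Complex.Gamma (-ν) ≠ 0 := Complex.Gamma_ne_zero_of_re_pos (by simpa using hν)
    rw [show -ν - 1 + 1 = -ν by ring, mul_inv_cancel₀ hne, zero_mul, add_zero] at h
    exact h
  have hl2 : Tendsto P (nhdsWithin 0 (Ioi 0)) (nhds (P x)) :=
    tendsto_const_nhds.congr' (by
      filter_upwards [self_mem_nhdsWithin] with y hy
      exact (hconst y hy).symm)
  exact tendsto_nhds_unique hl2 hl

/-- The recurrences of `F` and `G` show that the left-hand side is unchanged under `ν ↦ ν - 1`,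
which removes the restriction `Re ν < 0`. -/
lemma besselF_wronskian (ν : ℂ) {x : ℝ} (hx : 0 < x) :
    besselF ν x * besselG (-ν - 1) x + x * besselF (ν + 1) x * besselG (-ν) x = 1 := by
  have key : ∀ n : ℕ, ∀ ν : ℂ, ν.re < n →
      besselF ν x * besselG (-ν - 1) x + x * besselF (ν + 1) x * besselG (-ν) x = 1 := by
    intro n
    induction n with
    | zero => intro ν hν; exact besselF_wronskian_of_neg ν (by simpa using hν) hx
    | succ n ih =>
      intro ν hν
      have h := ih (ν - 1) (by push_cast at hν; simp; linarith)
      have r1 := besselF_rec (ν - 1) hx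
      have r2 := besselG_rec (-ν - 1) x
      rw [show ν - 1 + 1 = ν by ring, show -(ν - 1) - 1 = -ν by ring,
        show -(ν - 1) = -ν + 1 by ring] at h
      rw [show ν - 1 + 1 = ν by ring, show ν - 1 + 2 = ν + 1 by ring] at r1
      rw [show -ν - 1 + 1 = -ν by ring, show -ν - 1 + 2 = -ν + 1 by ring] at r2
      linear_combination h + besselG (-ν) x * r1 - besselF ν x * r2
  obtain ⟨n, hn⟩ := exists_nat_gt ν.re
  exact key n ν hn

/-- The connection formula. The cross-Wronskian identities at `ν` and `-ν-1` are, after the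
symmetry `x^μ F_μ = F_{-μ}`, two linear equations for `F_ν` and `F_{ν+1}` with the Wronskian of `G`
as determinant; this is Cramer's rule. -/
lemma sin_mul_besselF (ν : ℂ) {x : ℝ} (hx : 0 < x) :
    Complex.sin (ν * π) * besselF ν x =
      π * ((x : ℂ) ^ (-ν) * besselG (-ν) x - besselG ν x) := by
  have hx' : (x : ℂ) ≠ 0 := by exact_mod_cast hx.ne'
  have hπ : (π : ℂ) ≠ 0 := by exact_mod_cast Real.pi_ne_zero
  have p2 := besselF_wronskian ν hx
  have p1 := besselF_wronskian (-ν - 1) hx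
  have s0 := besselF_symm ν hx
  have s1 := besselF_symm (ν + 1) hx
  have w := besselG_wronskian ν x
  rw [show -(-ν - 1) - 1 = ν by ring, show -(-ν - 1) = ν + 1 by ring,
    show -ν - 1 + 1 = -ν by ring, ← s0, show -ν - 1 = -(ν + 1) by ring, ← s1,
    Complex.cpow_add _ _ hx', Complex.cpow_one] at p1
  have hw : Complex.sin (ν * π) = -π * (besselG ν x * besselG (-ν - 1) x -
      x * besselG (ν + 1) x * besselG (-ν) x) := by
    rw [w]; field_simp
  rw [hw, Complex.cpow_neg]
  have hxν : (x : ℂ) ^ ν ≠ 0 := by simp [Complex.cpow_eq_zero_iff, hx']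
  field_simp
  linear_combination besselG (-ν) x * p1 - (x : ℂ) ^ ν * besselG ν x * p2

/-! ### The absolutely convergent form of Basset's integral -/

/-- `A_ν(z) = ∫ e^{-iu} u (z²+u²)^{-ν-3/2} du`, the integral left after integrating Basset's
integral by parts. It converges absolutely for `Re ν > -1/2` and `Re z > 0`. -/
noncomputable def bassetA (ν z : ℂ) : ℂ :=
  ∫ u : ℝ, Complex.exp (-Complex.I * u) * (u * (z ^ 2 + (u : ℂ) ^ 2) ^ (-ν - 3 / 2))

lemma sq_add_sq_mem_slitPlane {z : ℂ} (hz : 0 < z.re) (u : ℝ) :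
    z ^ 2 + (u : ℂ) ^ 2 ∈ Complex.slitPlane := by
  have hre : (z ^ 2 + (u : ℂ) ^ 2).re = z.re ^ 2 - z.im ^ 2 + u ^ 2 := by
    simp [pow_two]
  have him : (z ^ 2 + (u : ℂ) ^ 2).im = 2 * z.re * z.im := by
    simp [pow_two]; ring
  rw [Complex.mem_slitPlane_iff, hre, him]
  by_cases h : z.im = 0
  · left; rw [h]; nlinarith [sq_nonneg u, pow_pos hz 2]
  · right; simp [hz.ne', h]

/-- A constant `M` with `1 + u² ≤ M |z²+u²|` for all real `u`, uniformly over `Re z ≥ δ` and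
`|Im z| ≤ R`. -/
noncomputable def bassetM (δ R : ℝ) : ℝ := 2 + (2 * R ^ 2 + 1) / δ ^ 2

lemma one_le_bassetM (δ R : ℝ) : 1 ≤ bassetM δ R := by
  have : 0 ≤ (2 * R ^ 2 + 1) / δ ^ 2 := by positivity
  unfold bassetM
  linarith

/-- Since `z² + u² = (z+iu)(z-iu)`, the square of its modulus is the product of
`(u ∓ Im z)² + (Re z)²`, and each factor is bounded below separately. -/
lemma one_add_sq_le {δ R : ℝ} {z : ℂ} (hδ : 0 < δ) (h1 : δ ≤ z.re) (h2 : |z.im| ≤ R) (u : ℝ) :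
    1 + u ^ 2 ≤ bassetM δ R * ‖z ^ 2 + (u : ℂ) ^ 2‖ := by
  have hM0 : 0 < bassetM δ R := one_pos.trans_le (one_le_bassetM δ R)
  have key : ∀ y : ℝ, |y| ≤ R → 1 + u ^ 2 ≤ bassetM δ R * ((u - y) ^ 2 + z.re ^ 2) := by
    intro y hy
    have e1 : y ^ 2 ≤ R ^ 2 := by rw [← sq_abs]; gcongr
    have e2 : δ ^ 2 ≤ z.re ^ 2 := by gcongr
    have e3 : 2 * R ^ 2 + 1 ≤ (2 * R ^ 2 + 1) / δ ^ 2 * z.re ^ 2 := by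
      rw [div_mul_eq_mul_div, le_div_iff₀ (by positivity)]
      gcongr
    have e4 : 0 ≤ (2 * R ^ 2 + 1) / δ ^ 2 * (u - y) ^ 2 := by positivity
    unfold bassetM
    nlinarith [sq_nonneg (u - 2 * y)]
  have k1 := key z.im h2
  have k2 := key (-z.im) (by rwa [abs_neg])
  have hn : ‖z ^ 2 + (u : ℂ) ^ 2‖ ^ 2 =
      ((u - z.im) ^ 2 + z.re ^ 2) * ((u - -z.im) ^ 2 + z.re ^ 2) := by
    rw [Complex.sq_norm, Complex.normSq_apply]
    simp [pow_two]
    ring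
  refine le_of_sq_le_sq ?_ (by positivity)
  rw [mul_pow, hn]
  calc (1 + u ^ 2) ^ 2 = (1 + u ^ 2) * (1 + u ^ 2) := by ring
    _ ≤ (bassetM δ R * ((u - z.im) ^ 2 + z.re ^ 2)) *
        (bassetM δ R * ((u - -z.im) ^ 2 + z.re ^ 2)) := by gcongr
    _ = _ := by ring

/-- Bound on `(z²+u²)^s`, uniform over `Re z ≥ δ`, `|Im z| ≤ R`, `p ≤ -Re s ≤ q` and `|Im s| ≤ B`.
The uniformity in both `z` and `s` serves the holomorphy of `A_ν` in `z` and its continuity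
in `ν`. -/
lemma norm_cpow_le {δ R : ℝ} {z : ℂ} (hδ : 0 < δ) (h1 : δ ≤ z.re) (h2 : |z.im| ≤ R) (u : ℝ)
    {s : ℂ} {p q B : ℝ} (hp : 0 ≤ p) (hps : p ≤ -s.re) (hq : -s.re ≤ q) (hB : |s.im| ≤ B) :
    ‖(z ^ 2 + (u : ℂ) ^ 2) ^ s‖ ≤ Real.exp (π * B) * bassetM δ R ^ q * (1 + u ^ 2) ^ (-p) := by
  have hM := one_le_bassetM δ R
  have hM0 : 0 < bassetM δ R := by linarith
  have hle := one_add_sq_le hδ h1 h2 u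
  set w := z ^ 2 + (u : ℂ) ^ 2
  have hw : 0 < ‖w‖ := by
    by_contra h
    have h0 : ‖w‖ = 0 := le_antisymm (not_lt.1 h) (norm_nonneg _)
    rw [h0] at hle
    nlinarith
  have hu1 : 1 ≤ 1 + u ^ 2 := by nlinarith
  have e1 : (Real.exp (w.arg * s.im))⁻¹ ≤ Real.exp (π * B) := by
    rw [← Real.exp_neg]
    apply Real.exp_le_exp.2
    calc -(w.arg * s.im) ≤ |w.arg * s.im| := neg_le_abs _
      _ = |w.arg| * |s.im| := abs_mul _ _
      _ ≤ π * B := by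
        gcongr
        exact Complex.abs_arg_le_pi w
  have e2 : ‖w‖ ^ s.re ≤ bassetM δ R ^ q * (1 + u ^ 2) ^ (-p) := by
    calc ‖w‖ ^ s.re ≤ ((1 + u ^ 2) / bassetM δ R) ^ s.re := by
          apply Real.rpow_le_rpow_of_nonpos (by positivity) _ (by linarith)
          rw [div_le_iff₀ hM0]
          linarith
      _ = bassetM δ R ^ (-s.re) * (1 + u ^ 2) ^ s.re := by
          rw [Real.div_rpow (by positivity) hM0.le, Real.rpow_neg hM0.le]
          field_simp
      _ ≤ _ := by
          gcongr
          linarith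
  calc ‖w ^ s‖ ≤ ‖w‖ ^ s.re / Real.exp (w.arg * s.im) := Complex.norm_cpow_le w s
    _ = (Real.exp (w.arg * s.im))⁻¹ * ‖w‖ ^ s.re := by ring
    _ ≤ Real.exp (π * B) * (bassetM δ R ^ q * (1 + u ^ 2) ^ (-p)) := by gcongr
    _ = _ := by ring

lemma norm_basset_le {δ R : ℝ} {z : ℂ} (hδ : 0 < δ) (h1 : δ ≤ z.re) (h2 : |z.im| ≤ R) (u : ℝ)
    {s : ℂ} {p q B : ℝ} (hp : 0 ≤ p) (hps : p ≤ -s.re) (hq : -s.re ≤ q) (hB : |s.im| ≤ B) :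
    ‖Complex.exp (-Complex.I * u) * (u * (z ^ 2 + (u : ℂ) ^ 2) ^ s)‖ ≤
      Real.exp (π * B) * bassetM δ R ^ q * (1 + ‖u‖ ^ 2) ^ (-(2 * p - 1) / 2) := by
  have hM := one_le_bassetM δ R
  have h := norm_cpow_le hδ h1 h2 u hp hps hq hB
  have hexp : ‖Complex.exp (-Complex.I * u)‖ = 1 := by
    rw [Complex.norm_exp]; simp
  have hu : |u| ≤ (1 + u ^ 2) ^ (1 / 2 : ℝ) := by
    rw [← Real.sqrt_eq_rpow]
    apply Real.abs_le_sqrt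
    linarith
  have hu0 : 0 < 1 + u ^ 2 := by positivity
  rw [norm_mul, hexp, one_mul, norm_mul, Complex.norm_real, Real.norm_eq_abs, sq_abs]
  calc |u| * ‖(z ^ 2 + (u : ℂ) ^ 2) ^ s‖
      ≤ (1 + u ^ 2) ^ (1 / 2 : ℝ) *
        (Real.exp (π * B) * bassetM δ R ^ q * (1 + u ^ 2) ^ (-p)) := by gcongr
    _ = _ := by
      rw [show -(2 * p - 1) / 2 = 1 / 2 + -p by ring, Real.rpow_add hu0]
      ring

lemma integrable_basset_bound (C : ℝ) {p : ℝ} (hp : 1 < p) :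
    Integrable (fun u : ℝ => C * (1 + ‖u‖ ^ 2) ^ (-(2 * p - 1) / 2)) :=
  (integrable_rpow_neg_one_add_norm_sq (by simp; linarith)).const_mul C

lemma continuous_cpow_sq {z : ℂ} (hz : 0 < z.re) (s : ℂ) :
    Continuous fun u : ℝ => (z ^ 2 + (u : ℂ) ^ 2) ^ s :=
  Continuous.cpow (by fun_prop) continuous_const (sq_add_sq_mem_slitPlane hz)

lemma continuous_basset {z : ℂ} (hz : 0 < z.re) (s : ℂ) :
    Continuous fun u : ℝ => Complex.exp (-Complex.I * u) * (u * (z ^ 2 + (u : ℂ) ^ 2) ^ s) := by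
  have := continuous_cpow_sq hz s
  fun_prop

lemma integrable_basset {z : ℂ} (hz : 0 < z.re) {s : ℂ} (hs : s.re < -1) :
    Integrable fun u : ℝ => Complex.exp (-Complex.I * u) * (u * (z ^ 2 + (u : ℂ) ^ 2) ^ s) :=
  (integrable_basset_bound _ (p := -s.re) (by linarith)).mono'
    (continuous_basset hz s).aestronglyMeasurable
    (Eventually.of_forall fun u => norm_basset_le hz le_rfl le_rfl u (by linarith) le_rfl le_rfl
      le_rfl)

lemma bassetA_differentiableAt {ν z : ℂ} (hν : -1 / 2 < ν.re) (hz : 0 < z.re) :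
    DifferentiableAt ℂ (bassetA ν) z := by
  have hs : (-ν - 3 / 2).re = -ν.re - 3 / 2 := by simp
  have hs' : (-ν - 3 / 2 - 1).re = -ν.re - 5 / 2 := by simp; ring
  have hball : ∀ y ∈ Metric.ball z (z.re / 2),
      z.re / 2 ≤ y.re ∧ |y.im| ≤ ‖z‖ + z.re / 2 ∧ ‖y‖ ≤ ‖z‖ + z.re / 2 := by
    intro y hy
    have hd : ‖y - z‖ < z.re / 2 := by simpa [dist_eq_norm] using hy
    have h1 := Complex.abs_re_le_norm (y - z)
    have h2 := Complex.abs_im_le_norm y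
    have h3 := norm_sub_norm_le y z
    have h4 := (abs_le.1 h1).1
    simp at h4
    exact ⟨by linarith, by linarith, by linarith⟩
  set C := Real.exp (π * |(-ν - 3 / 2 - 1).im|) *
    bassetM (z.re / 2) (‖z‖ + z.re / 2) ^ (-(-ν - 3 / 2 - 1).re)
  have h := hasDerivAt_integral_of_dominated_loc_of_deriv_le
    (μ := (volume : Measure ℝ)) (x₀ := z) (s := Metric.ball z (z.re / 2))
    (F := fun z u => Complex.exp (-Complex.I * u) * (u * (z ^ 2 + (u : ℂ) ^ 2) ^ (-ν - 3 / 2)))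
    (F' := fun z u => ((-ν - 3 / 2) * (2 * z)) *
      (Complex.exp (-Complex.I * u) * (u * (z ^ 2 + (u : ℂ) ^ 2) ^ (-ν - 3 / 2 - 1))))
    (bound := fun u => (‖(-ν - 3 / 2)‖ * (2 * (‖z‖ + z.re / 2)) * C) *
      (1 + ‖u‖ ^ 2) ^ (-(2 * (ν.re + 5 / 2) - 1) / 2))
    (Metric.ball_mem_nhds z (by linarith))
    (by
      filter_upwards [Metric.ball_mem_nhds z (show 0 < z.re / 2 by linarith)] with y hy
      exact (continuous_basset (by linarith [(hball y hy).1]) _).aestronglyMeasurable)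
    (integrable_basset hz (by rw [hs]; linarith))
    (((continuous_basset hz _).const_smul
      ((-ν - 3 / 2) * (2 * z))).aestronglyMeasurable)
    (Eventually.of_forall fun u y hy => by
      obtain ⟨b1, b2, b3⟩ := hball y hy
      have hb := norm_basset_le (by linarith) b1 b2 u (s := -ν - 3 / 2 - 1) (p := ν.re + 5 / 2)
        (by linarith) (by rw [hs']; linarith) le_rfl le_rfl
      rw [norm_mul, norm_mul, norm_mul, mul_assoc _ C]
      rw [Complex.norm_two]
      gcongr)
    (integrable_basset_bound _ (by linarith))
    (Eventually.of_forall fun u y hy => by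
      obtain ⟨b1, b2, b3⟩ := hball y hy
      have hd : HasDerivAt (fun y : ℂ => y ^ 2 + (u : ℂ) ^ 2) (2 * y) y := by
        simpa using (hasDerivAt_pow 2 y).add_const ((u : ℂ) ^ 2)
      have := ((hd.cpow_const (c := -ν - 3 / 2)
        (sq_add_sq_mem_slitPlane (by linarith) u)).const_mul (u : ℂ)).const_mul
          (Complex.exp (-Complex.I * u))
      refine this.congr_deriv ?_
      ring)
  exact h.2.differentiableAt

lemma bassetA_continuousAt {ν z : ℂ} (hν : -1 / 2 < ν.re) (hz : 0 < z.re) :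
    ContinuousAt (fun ν => bassetA ν z) ν := by
  have hre : ∀ᶠ μ : ℂ in nhds ν, (ν.re - 1 / 2) / 2 < μ.re ∧ μ.re < ν.re + 1 :=
    Complex.continuous_re.continuousAt.eventually (Ioo_mem_nhds (by linarith) (by linarith))
  have him : ∀ᶠ μ : ℂ in nhds ν, |μ.im| < |ν.im| + 1 :=
    (Complex.continuous_im.abs.continuousAt (x := ν)).eventually
      (Iio_mem_nhds (show |ν.im| < |ν.im| + 1 by linarith))
  refine continuousAt_of_dominated
    (bound := fun u : ℝ => (Real.exp (π * (|ν.im| + 1)) *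
      bassetM z.re |z.im| ^ (ν.re + 5 / 2)) *
      (1 + ‖u‖ ^ 2) ^ (-(2 * ((ν.re - 1 / 2) / 2 + 3 / 2) - 1) / 2))
    (Eventually.of_forall fun μ => (continuous_basset hz _).aestronglyMeasurable) ?_
    (integrable_basset_bound _ (by linarith)) ?_
  · filter_upwards [hre, him] with μ h1 h2
    have hs : (-μ - 3 / 2).re = -μ.re - 3 / 2 := by simp
    have hs' : (-μ - 3 / 2).im = -μ.im := by simp
    refine Eventually.of_forall fun u => norm_basset_le hz le_rfl le_rfl u (by linarith) ?_ ?_ ?_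
    · rw [hs]; linarith
    · rw [hs]; linarith
    · rw [hs', abs_neg]; exact h2.le
  · refine Eventually.of_forall fun u => ?_
    have hne := Complex.slitPlane_ne_zero (sq_add_sq_mem_slitPlane hz u)
    refine continuousAt_const.mul (continuousAt_const.mul ?_)
    exact ContinuousAt.const_cpow (by fun_prop) (Or.inl hne)

/-- Integration by parts: the boundary terms are `O(N^{-2 Re ν - 1})` and vanish in the limit. -/
lemma basset_tendsto {ν z : ℂ} (hν : -1 / 2 < ν.re) (hz : 0 < z.re) :
    Tendsto (fun N : ℝ => ∫ u in (-N)..N,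
        Complex.exp (-Complex.I * (u : ℂ)) * (z ^ 2 + (u : ℂ) ^ 2) ^ (-ν - 1/2))
      atTop (nhds (Complex.I * (2 * ν + 1) * bassetA ν z)) := by
  have hs : (-ν - 1 / 2).re = -ν.re - 1 / 2 := by simp
  have hs3 : (-ν - 3 / 2).re = -ν.re - 3 / 2 := by simp
  set w : ℝ → ℂ := fun u => (z ^ 2 + (u : ℂ) ^ 2) ^ (-ν - 1 / 2) with hw
  set v : ℝ → ℂ := fun u => Complex.I * Complex.exp (-Complex.I * u) with hv
  have hexp : ∀ u : ℝ, ‖v u‖ = 1 := by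
    intro u
    simp [hv, Complex.norm_exp]
  have hparts : ∀ N : ℝ, ∫ u in (-N)..N,
        Complex.exp (-Complex.I * (u : ℂ)) * (z ^ 2 + (u : ℂ) ^ 2) ^ (-ν - 1/2) =
      w N * v N - w (-N) * v (-N) - ∫ u in (-N)..N, (-(Complex.I * (2 * ν + 1))) *
        (Complex.exp (-Complex.I * u) * (u * (z ^ 2 + (u : ℂ) ^ 2) ^ (-ν - 3 / 2))) := by
    intro N
    have c1 := continuous_cpow_sq hz (-ν - 1 / 2 - 1)
    have := intervalIntegral.integral_mul_deriv_eq_deriv_mul (a := -N) (b := N)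
      (u := w) (v := v)
      (u' := fun u : ℝ => (-ν - 1 / 2) * (z ^ 2 + (u : ℂ) ^ 2) ^ (-ν - 1 / 2 - 1) * (2 * u))
      (v' := fun u : ℝ => Complex.exp (-Complex.I * u))
      (fun u _ => by
        have hd : HasDerivAt (fun y : ℂ => z ^ 2 + y ^ 2) (2 * u) (u : ℂ) := by
          simpa using (hasDerivAt_pow 2 (u : ℂ)).const_add (z ^ 2)
        exact (hd.cpow_const (c := -ν - 1 / 2) (sq_add_sq_mem_slitPlane hz u)).comp_ofReal)
      (fun u _ => by
        have hd : HasDerivAt (fun y : ℂ => -Complex.I * y) (-Complex.I) (u : ℂ) := by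
          simpa using (hasDerivAt_id (u : ℂ)).const_mul (-Complex.I)
        refine ((hd.cexp.const_mul Complex.I).comp_ofReal).congr_deriv ?_
        linear_combination -Complex.exp (-Complex.I * u) * Complex.I_sq)
      (Continuous.intervalIntegrable (by fun_prop) _ _)
      (Continuous.intervalIntegrable (by fun_prop) _ _)
    rw [← intervalIntegral.integral_congr (fun u _ => mul_comm (w u) _), this]
    congr 1
    refine intervalIntegral.integral_congr fun u _ => ?_
    simp only [hv]
    rw [show -ν - 1 / 2 - 1 = -ν - 3 / 2 by ring]
    ring
  have hbd : Tendsto w (atTop ⊔ atBot) (nhds 0) := by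
    have hN : Tendsto (fun u : ℝ => Real.exp (π * |(-ν - 1 / 2).im|) *
        bassetM z.re |z.im| ^ (-(-ν - 1 / 2).re) * (1 + u ^ 2) ^ (-(ν.re + 1 / 2)))
        (atTop ⊔ atBot) (nhds 0) := by
      have h1 : Tendsto (fun u : ℝ => 1 + u ^ 2) (atTop ⊔ atBot) atTop := by
        refine tendsto_atTop_add_const_left _ _ (Tendsto.sup ?_ ?_)
        · exact tendsto_pow_atTop two_ne_zero
        · simpa [Function.comp_def] using
            (tendsto_pow_atTop (α := ℝ) two_ne_zero).comp tendsto_neg_atBot_atTop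
      have h2 := (tendsto_rpow_neg_atTop (show 0 < ν.re + 1 / 2 by linarith)).comp h1
      simpa using h2.const_mul _
    refine squeeze_zero_norm (fun u => ?_) hN
    exact norm_cpow_le hz le_rfl le_rfl u (by linarith) (by rw [hs]; linarith) le_rfl le_rfl
  have hwv : Tendsto (fun u => w u * v u) (atTop ⊔ atBot) (nhds 0) := by
    refine squeeze_zero_norm (fun u => ?_) (tendsto_zero_iff_norm_tendsto_zero.1 hbd)
    rw [norm_mul, hexp, mul_one]
  have t1 := hwv.mono_left (le_sup_left : atTop ≤ atTop ⊔ atBot)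
  have t2 := (hwv.mono_left (le_sup_right : atBot ≤ atTop ⊔ atBot)).comp tendsto_neg_atTop_atBot
  have t3 := intervalIntegral_tendsto_integral
    ((integrable_basset hz (s := -ν - 3 / 2) (by rw [hs3]; linarith)).const_mul
      (-(Complex.I * (2 * ν + 1)))) tendsto_neg_atTop_atBot tendsto_id
  have t := (t1.sub t2).sub t3
  rw [integral_const_mul] at t
  refine (t.congr fun N => (hparts N).symm).trans (le_of_eq ?_)
  rw [bassetA]
  congr 1
  ring

/-! ### Evaluation for real positive `z` -/

lemma integral_abs_mul_exp {s : ℝ} (hs : 0 < s) :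
    ∫ u : ℝ, |u| * Real.exp (-s * u ^ 2) = s⁻¹ := by
  have h1 : ∫ u : ℝ, |u| * Real.exp (-s * u ^ 2) = ∫ u : ℝ, |u| * Real.exp (-s * |u| ^ 2) := by
    simp only [sq_abs]
  have h2 := integral_comp_abs (f := fun u : ℝ => u * Real.exp (-s * u ^ 2))
  have h3 := integral_mul_cexp_neg_mul_sq (b := (s : ℂ)) (by simpa using hs)
  have h4 : ∫ u in Ioi (0 : ℝ), u * Real.exp (-s * u ^ 2) = (2 * s)⁻¹ := by
    have : ((∫ u in Ioi (0 : ℝ), u * Real.exp (-s * u ^ 2) : ℝ) : ℂ) = (((2 * s)⁻¹ : ℝ) : ℂ) := by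
      rw [← integral_complex_ofReal]
      push_cast
      rw [← h3]
    exact_mod_cast this
  rw [h1, h2, h4]
  field_simp

/-- Obtained from the Fourier transform of the Gaussian, because
`e^{-iu-su²}` has derivative `-i e^{-iu-su²} - 2s u e^{-iu-su²}`, which integrates to zero. -/
lemma integral_mul_gauss {s : ℝ} (hs : 0 < s) :
    ∫ u : ℝ, Complex.exp (-Complex.I * u) * (u * Complex.exp (-s * (u : ℂ) ^ 2)) =
      -(Complex.I / (2 * s)) * ((π / s : ℂ) ^ (1 / 2 : ℂ) * Complex.exp (-1 / (4 * s))) := by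
  have hs' : (s : ℂ) ≠ 0 := by exact_mod_cast hs.ne'
  have hb : 0 < (s : ℂ).re := by simpa using hs
  have hn : ∀ u : ℝ, ‖Complex.exp (-Complex.I * u)‖ ≤ 1 := fun u => by
    rw [Complex.norm_exp]; simp
  have i1 : Integrable fun u : ℝ =>
      Complex.exp (-Complex.I * u) * (u * Complex.exp (-s * (u : ℂ) ^ 2)) :=
    (integrable_mul_cexp_neg_mul_sq hb).bdd_mul (c := 1) (by fun_prop) (Eventually.of_forall hn)
  have i0 : Integrable fun u : ℝ =>
      Complex.exp (-Complex.I * u) * Complex.exp (-s * (u : ℂ) ^ 2) :=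
    (integrable_cexp_neg_mul_sq hb).bdd_mul (c := 1) (by fun_prop) (Eventually.of_forall hn)
  have h0 := integral_eq_zero_of_hasDerivAt_of_integrable
    (f := fun u : ℝ => Complex.exp (-Complex.I * u) * Complex.exp (-s * (u : ℂ) ^ 2))
    (f' := fun u : ℝ => (-Complex.I) *
      (Complex.exp (-Complex.I * u) * Complex.exp (-s * (u : ℂ) ^ 2)) +
      (-(2 * s : ℂ)) * (Complex.exp (-Complex.I * u) * (u * Complex.exp (-s * (u : ℂ) ^ 2))))
    (fun u => by
      have d1 : HasDerivAt (fun y : ℂ => -Complex.I * y) (-Complex.I) (u : ℂ) := by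
        simpa using (hasDerivAt_id (u : ℂ)).const_mul (-Complex.I)
      have d2 : HasDerivAt (fun y : ℂ => -(s : ℂ) * y ^ 2) (-s * (2 * u)) (u : ℂ) := by
        simpa using (hasDerivAt_pow 2 (u : ℂ)).const_mul (-(s : ℂ))
      refine ((d1.cexp.mul d2.cexp).comp_ofReal).congr_deriv ?_
      ring)
    ((i0.const_mul _).add (i1.const_mul _)) i0
  rw [integral_add (i0.const_mul _) (i1.const_mul _), integral_const_mul, integral_const_mul] at h0
  have hg := fourierIntegral_gaussian hb (-1)
  rw [show -(-1 : ℂ) ^ 2 = -1 by norm_num, show Complex.I * -1 = -Complex.I by ring] at hg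
  rw [hg] at h0
  generalize (∫ u : ℝ, Complex.exp (-Complex.I * u) * (u * Complex.exp (-s * (u : ℂ) ^ 2))) = X at *
  generalize ((π / s : ℂ) ^ (1 / 2 : ℂ) * Complex.exp (-1 / (4 * s))) = Y at *
  field_simp
  linear_combination -h0

/-- Write `Γ(ν+3/2) (r²+u²)^{-ν-3/2} = ∫_0^∞ s^{ν+1/2} e^{-(r²+u²)s} ds`, exchange the integrals,
and evaluate the inner one by `integral_mul_gauss`. -/
lemma Gamma_mul_bassetA {ν : ℂ} (hν : -1 / 2 < ν.re) {r : ℝ} (hr : 0 < r) :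
    Complex.Gamma (ν + 3 / 2) * bassetA ν r =
      -(Complex.I * (π : ℂ) ^ (1 / 2 : ℂ) / 2) *
        ∫ s in Ioi (0 : ℝ), (s : ℂ) ^ (ν - 1) * (Real.exp (-(r ^ 2 * s) - 1 / (4 * s)) : ℂ) := by
  set f : ℝ → ℝ → ℂ := fun u s => Complex.exp (-Complex.I * u) *
    (u * ((s : ℂ) ^ (ν + 1 / 2) * Complex.exp (-(((r ^ 2 + u ^ 2 : ℝ) : ℂ) * s)))) with hf
  have hre : (ν + 3 / 2).re = ν.re + 3 / 2 := by simp
  have hre' : (ν + 1 / 2).re = ν.re + 1 / 2 := by simp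
  have h1 : ∀ u : ℝ, Complex.Gamma (ν + 3 / 2) *
      (Complex.exp (-Complex.I * u) * (u * ((r : ℂ) ^ 2 + (u : ℂ) ^ 2) ^ (-ν - 3 / 2))) =
      ∫ s in Ioi (0 : ℝ), f u s := by
    intro u
    have hp : 0 < r ^ 2 + u ^ 2 := by positivity
    have h := Complex.integral_cpow_mul_exp_neg_mul_Ioi (a := ν + 3 / 2) (r := r ^ 2 + u ^ 2)
      (by rw [hre]; linarith) hp
    rw [show ν + 3 / 2 - 1 = ν + 1 / 2 by ring] at h
    simp only [hf]
    rw [integral_const_mul, integral_const_mul, h, one_div, Complex.inv_cpow, ← Complex.cpow_neg]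
    · rw [show -(ν + 3 / 2) = -ν - 3 / 2 by ring]
      push_cast
      ring
    · rw [Complex.arg_ofReal_of_nonneg hp.le]; exact Real.pi_pos.ne
  have hnorm : ∀ s ∈ Ioi (0 : ℝ), ∀ u : ℝ, ‖f u s‖ =
      (s ^ (ν.re + 1 / 2) * Real.exp (-(r ^ 2) * s)) * (|u| * Real.exp (-s * u ^ 2)) := by
    intro s hs u
    simp only [hf]
    rw [norm_mul, norm_mul, norm_mul, Complex.norm_cpow_eq_rpow_re_of_pos hs, hre',
      Complex.norm_exp, Complex.norm_exp, Complex.norm_real, Real.norm_eq_abs,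
      ← Complex.ofReal_mul, ← Complex.ofReal_neg, Complex.ofReal_re,
      show -((r ^ 2 + u ^ 2) * s) = -(r ^ 2) * s + -s * u ^ 2 by ring, Real.exp_add]
    simp
    ring
  have hmeas : Measurable (Function.uncurry f) := by
    simp only [hf, Function.uncurry_def]
    fun_prop
  -- The factor `u` gains `1/s` upon integration in `u`, so the norm integrates to a multiple
  -- of `Γ(Re ν + 1/2)`; this is where `Re ν > -1/2` enters.
  have hfint : Integrable (Function.uncurry f)
      ((volume : Measure ℝ).prod (volume.restrict (Ioi (0 : ℝ)))) := by
    rw [integrable_prod_iff' hmeas.aestronglyMeasurable]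
    constructor
    · filter_upwards [ae_restrict_mem measurableSet_Ioi] with s hs
      have hi := ((integrable_mul_exp_neg_mul_sq hs).norm).const_mul
        (s ^ (ν.re + 1 / 2) * Real.exp (-(r ^ 2) * s))
      refine hi.mono' (hmeas.comp (by fun_prop)).aestronglyMeasurable
        (Eventually.of_forall fun u => ?_)
      refine (hnorm s hs u).le.trans (le_of_eq ?_)
      rw [norm_mul, Real.norm_eq_abs, Real.norm_of_nonneg (Real.exp_pos _).le]
    · have hi := integrableOn_rpow_mul_exp_neg_mul_rpow (p := 1) (s := ν.re - 1 / 2) (b := r ^ 2)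
        (by linarith) one_pos (by positivity)
      refine IntegrableOn.congr_fun hi (fun s hs => ?_) measurableSet_Ioi
      have hs0 : 0 < s := hs
      simp only [Function.uncurry_apply_pair]
      rw [integral_congr_ae (Eventually.of_forall (hnorm s hs)), integral_const_mul,
        integral_abs_mul_exp hs, Real.rpow_one,
        show ν.re + 1 / 2 = (ν.re - 1 / 2) + 1 by ring, Real.rpow_add hs, Real.rpow_one]
      field_simp
  rw [bassetA, ← integral_const_mul, integral_congr_ae (Eventually.of_forall h1),
    integral_integral_swap hfint, ← integral_const_mul]
  refine setIntegral_congr_fun measurableSet_Ioi fun s hs => ?_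
  have hs0 : 0 < s := hs
  have hs' : (s : ℂ) ≠ 0 := by exact_mod_cast hs0.ne'
  have e : ∀ u : ℝ, f u s = ((s : ℂ) ^ (ν + 1 / 2) * Complex.exp (-(r ^ 2 * s))) *
      (Complex.exp (-Complex.I * u) * (u * Complex.exp (-s * (u : ℂ) ^ 2))) := by
    intro u
    simp only [hf]
    push_cast
    rw [show -(((r : ℂ) ^ 2 + (u : ℂ) ^ 2) * s) = -(r ^ 2 * s) + -s * (u : ℂ) ^ 2 by ring,
      Complex.exp_add]
    ring
  simp only [e]
  rw [integral_const_mul, integral_mul_gauss hs0]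
  have hdiv : ((π : ℂ) / s) ^ (1 / 2 : ℂ) = (π : ℂ) ^ (1 / 2 : ℂ) * ((s : ℂ) ^ (1 / 2 : ℂ))⁻¹ := by
    rw [div_eq_mul_inv, ← Complex.ofReal_inv, Complex.mul_cpow_ofReal_nonneg Real.pi_pos.le
      (inv_nonneg.2 hs0.le), Complex.ofReal_inv, Complex.inv_cpow]
    rw [Complex.arg_ofReal_of_nonneg hs0.le]; exact Real.pi_pos.ne
  have hhalf : (s : ℂ) ^ (1 / 2 : ℂ) ≠ 0 := by simp [Complex.cpow_eq_zero_iff, hs']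
  rw [hdiv, Complex.cpow_add _ _ hs', Complex.cpow_sub _ _ hs', Complex.cpow_one]
  push_cast
  rw [show -((r : ℂ) ^ 2 * s) - 1 / (4 * s) = -(r ^ 2 * s) + -1 / (4 * s) by ring, Complex.exp_add]
  field_simp

/-- The substitution `t = 4 s` in the inverted form of `F_ν(r²/4)`. -/
lemma besselF_scale (ν : ℂ) (r : ℝ) :
    besselF ν (r ^ 2 / 4) = (4 : ℂ) ^ ν *
      ∫ s in Ioi (0 : ℝ), (s : ℂ) ^ (ν - 1) * (Real.exp (-(r ^ 2 * s) - 1 / (4 * s)) : ℂ) := by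
  have h := integral_comp_mul_left_Ioi (fun t : ℝ => (t : ℂ) ^ (ν - 1) *
    (Real.exp (-(r ^ 2 / 4 * t) - 1 / t) : ℂ)) 0 (show (0 : ℝ) < 4 by norm_num)
  rw [mul_zero, ← besselF_inv, Complex.real_smul] at h
  have h2 : besselF ν (r ^ 2 / 4) = 4 * ∫ s in Ioi (0 : ℝ), ((4 * s : ℝ) : ℂ) ^ (ν - 1) *
      (Real.exp (-(r ^ 2 / 4 * (4 * s)) - 1 / (4 * s)) : ℂ) := by
    rw [h]; push_cast; ring
  rw [h2, ← integral_const_mul, ← integral_const_mul]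
  refine setIntegral_congr_fun measurableSet_Ioi fun s hs => ?_
  have hs0 : 0 < s := hs
  rw [Complex.ofReal_mul, Complex.mul_cpow_ofReal_nonneg (by norm_num) hs0.le]
  rw [Complex.cpow_sub (x := ((4 : ℝ) : ℂ)) _ _ (by norm_num), Complex.cpow_one,
    show r ^ 2 / 4 * (4 * s) = r ^ 2 * s by ring]
  push_cast
  ring

/-- The right-hand side of Basset's formula, with the improper integral expressed as
`i (2ν+1) A_ν(z)`. -/
noncomputable def bassetR (ν z : ℂ) : ℂ :=
  ((2 * z) ^ ν * Complex.Gamma (ν + 1/2) / (2 * (Real.sqrt Real.pi : ℂ))) *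
    (Complex.I * (2 * ν + 1) * bassetA ν z)

lemma bassetR_ofReal {ν : ℂ} (hν : -1 / 2 < ν.re) {r : ℝ} (hr : 0 < r) :
    bassetR ν r = ((r / 2 : ℝ) : ℂ) ^ ν * besselF ν (r ^ 2 / 4) / 2 := by
  have hA := Gamma_mul_bassetA hν hr
  have hne : ν + 1 / 2 ≠ 0 := by
    intro h
    have := congrArg Complex.re h
    simp at this
    linarith
  have hG := Complex.Gamma_add_one (ν + 1 / 2) hne
  rw [show ν + 1 / 2 + 1 = ν + 3 / 2 by ring] at hG
  have hsqrt : ((Real.sqrt π : ℝ) : ℂ) = (π : ℂ) ^ (1 / 2 : ℂ) := by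
    rw [Real.sqrt_eq_rpow, Complex.ofReal_cpow Real.pi_pos.le]
    norm_num
  have hs0 : (π : ℂ) ^ (1 / 2 : ℂ) ≠ 0 := by
    rw [← hsqrt]
    exact_mod_cast (Real.sqrt_pos.2 Real.pi_pos).ne'
  rw [hG] at hA
  have hpow : (2 * (r : ℂ)) ^ ν = ((r / 2 : ℝ) : ℂ) ^ ν * (4 : ℂ) ^ ν := by
    have := Complex.mul_cpow_ofReal_nonneg (a := r / 2) (b := 4) (by positivity) (by norm_num) ν
    rw [← Complex.ofReal_mul, show r / 2 * 4 = 2 * r by ring] at this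
    simpa using this
  rw [besselF_scale, bassetR, hsqrt, hpow]
  set J := ∫ s in Ioi (0 : ℝ), (s : ℂ) ^ (ν - 1) * (Real.exp (-(r ^ 2 * s) - 1 / (4 * s)) : ℂ)
  have e : Complex.Gamma (ν + 1 / 2) * ((2 * ν + 1) * bassetA ν r) =
      -(Complex.I * (π : ℂ) ^ (1 / 2 : ℂ)) * J := by linear_combination 2 * hA
  calc _ = ((r / 2 : ℝ) : ℂ) ^ ν * (4 : ℂ) ^ ν / (2 * (π : ℂ) ^ (1 / 2 : ℂ)) * Complex.I *
        (Complex.Gamma (ν + 1 / 2) * ((2 * ν + 1) * bassetA ν r)) := by ring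
    _ = (-(Complex.I ^ 2)) * (((r / 2 : ℝ) : ℂ) ^ ν * ((4 : ℂ) ^ ν * J)) / 2 := by
        rw [e]; field_simp
    _ = _ := by rw [Complex.I_sq]; ring

lemma sin_ne_zero_of_not_int {ν : ℂ} (hν : ¬ ∃ n : ℤ, ν = n) : Complex.sin (ν * π) ≠ 0 := by
  rw [Complex.sin_ne_zero_iff]
  intro k hk
  have hπ : (π : ℂ) ≠ 0 := by exact_mod_cast Real.pi_ne_zero
  exact hν ⟨k, mul_right_cancel₀ hπ hk⟩

/-! ### Extension to complex `z` and to integer `ν` -/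

lemma bessel_eq_bassetR_ofReal {ν : ℂ} (hν : -1 / 2 < ν.re) (hn : ¬ ∃ n : ℤ, ν = n)
    {r : ℝ} (hr : 0 < r) :
    ((Real.pi : ℂ) / (2 * Complex.sin (ν * (Real.pi : ℂ)))) *
      (besselI (-ν) r - besselI ν r) = bassetR ν r := by
  have hr' : (r : ℂ) ≠ 0 := by exact_mod_cast hr.ne'
  have hsin := sin_ne_zero_of_not_int hn
  have h := sin_mul_besselF ν (x := r ^ 2 / 4) (by positivity)
  have hx : ((r ^ 2 / 4 : ℝ) : ℂ) ^ (-ν) = ((r / 2 : ℝ) : ℂ) ^ (-ν) * ((r / 2 : ℝ) : ℂ) ^ (-ν) := by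
    rw [← Complex.mul_cpow_ofReal_nonneg (by positivity) (by positivity), ← Complex.ofReal_mul]
    congr 2
    ring
  have hr2 : ((r / 2 : ℝ) : ℂ) ≠ 0 := by exact_mod_cast (half_pos hr).ne'
  have hinv : ((r / 2 : ℝ) : ℂ) ^ ν * ((r / 2 : ℝ) : ℂ) ^ (-ν) = 1 := by
    rw [← Complex.cpow_add _ _ hr2, add_neg_cancel, Complex.cpow_zero]
  rw [bassetR_ofReal hν hr, besselI_eq _ _ hr', besselI_eq _ _ hr']
  rw [hx] at h
  have c1 : (r : ℂ) / 2 = ((r / 2 : ℝ) : ℂ) := by push_cast; rfl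
  have c2 : (r : ℂ) ^ 2 / 4 = ((r ^ 2 / 4 : ℝ) : ℂ) := by push_cast; rfl
  rw [c1, c2]
  rw [div_mul_eq_mul_div, div_eq_div_iff (by simpa using hsin) two_ne_zero]
  linear_combination (-2 * ((r / 2 : ℝ) : ℂ) ^ ν) * h -
    2 * π * ((r / 2 : ℝ) : ℂ) ^ (-ν) * besselG (-ν) ((r ^ 2 / 4 : ℝ) : ℂ) * hinv

lemma besselI_differentiableAt (ν : ℂ) {z : ℂ} (hz : 0 < z.re) :
    DifferentiableAt ℂ (besselI ν) z := by
  have hd : DifferentiableAt ℂ (fun z : ℂ => (z / 2) ^ ν * besselG ν (z ^ 2 / 4)) z := by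
    refine DifferentiableAt.mul ?_ ?_
    · refine DifferentiableAt.cpow_const (by fun_prop) (Or.inl ?_)
      simpa using hz
    · exact DifferentiableAt.comp (g := besselG ν) z (besselG_hasDerivAt ν _).differentiableAt
        (by fun_prop)
  refine hd.congr_of_eventuallyEq ?_
  have hz0 : z ≠ 0 := by rintro rfl; simp at hz
  filter_upwards [isOpen_ne.mem_nhds hz0] with y hy
  exact besselI_eq ν y hy

/-- Analytic continuation in `z` from the positive real axis to the right half-plane. -/
lemma bessel_eq_bassetR {ν z : ℂ} (hν : -1 / 2 < ν.re) (hz : 0 < z.re)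
    (hn : ¬ ∃ n : ℤ, ν = n) :
    ((Real.pi : ℂ) / (2 * Complex.sin (ν * (Real.pi : ℂ)))) *
      (besselI (-ν) z - besselI ν z) = bassetR ν z := by
  have hopen : IsOpen {z : ℂ | 0 < z.re} := isOpen_lt continuous_const Complex.continuous_re
  have hconn : IsPreconnected {z : ℂ | 0 < z.re} :=
    (convex_halfSpace_re_gt 0).isPreconnected
  have hL : AnalyticOnNhd ℂ (fun z => ((Real.pi : ℂ) / (2 * Complex.sin (ν * (Real.pi : ℂ)))) *
      (besselI (-ν) z - besselI ν z)) {z : ℂ | 0 < z.re} := by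
    refine DifferentiableOn.analyticOnNhd (fun w hw => ?_) hopen
    exact (((besselI_differentiableAt (-ν) hw).sub
      (besselI_differentiableAt ν hw)).const_mul _).differentiableWithinAt
  have hR : AnalyticOnNhd ℂ (bassetR ν) {z : ℂ | 0 < z.re} := by
    refine DifferentiableOn.analyticOnNhd (fun w hw => ?_) hopen
    have hw : 0 < w.re := hw
    refine DifferentiableAt.differentiableWithinAt ?_
    unfold bassetR
    refine DifferentiableAt.mul ?_ ((bassetA_differentiableAt hν hw).const_mul _)
    refine ((DifferentiableAt.cpow_const (by fun_prop) (Or.inl ?_)).mul_const _).div_const _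
    simpa using hw
  refine hL.eqOn_of_preconnected_of_frequently_eq hR hconn (z₀ := 1) (by simp) ?_ hz
  have ht : Tendsto (fun r : ℝ => (r : ℂ)) (nhdsWithin 1 {1}ᶜ) (nhdsWithin 1 {1}ᶜ) := by
    refine tendsto_nhdsWithin_iff.2 ⟨?_, ?_⟩
    · exact (Complex.continuous_ofReal.tendsto' 1 1 (by simp)).mono_left nhdsWithin_le_nhds
    · filter_upwards [self_mem_nhdsWithin] with r hr
      simpa using hr
  refine ht.frequently (Eventually.frequently ?_)
  filter_upwards [nhdsWithin_le_nhds (Ioi_mem_nhds (show (0 : ℝ) < 1 by norm_num))] with r hr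
  exact bessel_eq_bassetR_ofReal hν hn hr

lemma bassetR_continuousAt {ν z : ℂ} (hν : -1 / 2 < ν.re) (hz : 0 < z.re) :
    ContinuousAt (fun ν => bassetR ν z) ν := by
  have hz0 : 2 * z ≠ 0 := by
    intro h
    have h0 : z = 0 := by simpa using h
    simp [h0] at hz
  have hG : ContinuousAt (fun μ : ℂ => Complex.Gamma (μ + 1 / 2)) ν := by
    refine ContinuousAt.comp (g := Complex.Gamma) ?_ (by fun_prop)
    refine (Complex.differentiableAt_Gamma _ fun m h => ?_).continuousAt
    have := congrArg Complex.re h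
    simp at this
    have hm : (0 : ℝ) ≤ m := Nat.cast_nonneg m
    linarith
  unfold bassetR
  refine ContinuousAt.mul ?_ (ContinuousAt.mul (by fun_prop) (bassetA_continuousAt hν hz))
  exact ((ContinuousAt.const_cpow continuousAt_id (Or.inl hz0)).mul hG).div_const _

/-- **Basset's integral formula.** For `Re ν > -1/2` and `Re z > 0`, the two-sided improper
Riemann integral `∫_{-∞}^∞ e^{-iu} (z² + u²)^{-ν-1/2} du` converges (as the limit of
`∫_{-N}^N` as `N → ∞`) to a value `L` with
`K_ν(z) = ((2z)^ν Γ(ν+1/2) / (2√π)) · L`. -/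
theorem besselK_basset (ν z : ℂ) (hν : -1/2 < ν.re) (hz : 0 < z.re) :
    ∃ L : ℂ,
      Tendsto (fun N : ℝ => ∫ u in (-N)..N,
          Complex.exp (-Complex.I * (u : ℂ)) * (z ^ 2 + (u : ℂ) ^ 2) ^ (-ν - 1/2))
        atTop (nhds L) ∧
      besselK ν z = ((2 * z) ^ ν * Complex.Gamma (ν + 1/2) / (2 * (Real.sqrt Real.pi : ℂ))) * L := by
  refine ⟨_, basset_tendsto hν hz, ?_⟩
  change besselK ν z = bassetR ν z
  rw [besselK]
  split_ifs with h
  · refine Tendsto.limUnder_eq ?_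
    refine ((bassetR_continuousAt hν hz).tendsto.mono_left nhdsWithin_le_nhds).congr' ?_
    obtain ⟨n, rfl⟩ := h
    have h1 : ∀ᶠ μ : ℂ in nhds (n : ℂ), -1 / 2 < μ.re :=
      Complex.continuous_re.continuousAt.eventually (Ioi_mem_nhds hν)
    filter_upwards [nhdsWithin_le_nhds h1, self_mem_nhdsWithin,
      nhdsWithin_le_nhds (Metric.ball_mem_nhds (n : ℂ) one_pos)] with μ h1 h2 h3
    refine (bessel_eq_bassetR h1 hz ?_).symm
    rintro ⟨m, rfl⟩
    -- distinct integers are at distance at least one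
    have h4 : ‖(m : ℂ) - n‖ < 1 := by simpa [dist_eq_norm] using h3
    rw [← Int.cast_sub, Complex.norm_intCast] at h4
    have h5 : |m - n| < 1 := by exact_mod_cast h4
    have h6 : m = n := by rw [Int.abs_lt_one_iff] at h5; omega
    exact h2 (by rw [h6]; rfl)
  · exact bessel_eq_bassetR hν hz h
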